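/- Let τ = (1 + √5)/2 and let p ∈ {4, 5, 10}. Then the lattice S(p,τ) is generated by the union of two mirror stabilizers: the subgroup of GL(3,ℂ) generated by Stab(m₁) ∪ Stab(m₂) equals S(p,τ), where m₁ is the mirror of the complex reflection R₁ and m₂ = span_ℂ{e₁, e₂} is the mirror of the complex reflection (R₁R₂)⁵. -/

import Mathlib

open Matrix

noncomputable section

/-- `u = exp(2πi/(3p))`. -/
def uPar (p : ℕ) : ℂ := Complex.exp (2 * Real.pi * Complex.I / (3 * p))

/-- `α = 2 − u³ − conj(u)³`. -/
def alphaPar (p : ℕ) : ℂ :=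
  2 - uPar p ^ 3 - starRingEnd ℂ (uPar p) ^ 3

/-- `β = (conj(u)² − u)·τ`. -/
def betaPar (p : ℕ) (τ : ℂ) : ℂ := (starRingEnd ℂ (uPar p) ^ 2 - uPar p) * τ

/-- The generator `R₁` of `S(p,τ)`. -/
def R1S (p : ℕ) (τ : ℂ) : Matrix (Fin 3) (Fin 3) ℂ :=
  !![uPar p ^ 2, τ, -(uPar p) * starRingEnd ℂ τ;
     0, starRingEnd ℂ (uPar p), 0;
     0, 0, starRingEnd ℂ (uPar p)]

/-- The reflection `R₂ = J·R₁·J⁻¹` of `S(p,τ)`. -/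
def R2S (p : ℕ) (τ : ℂ) : Matrix (Fin 3) (Fin 3) ℂ :=
  !![starRingEnd ℂ (uPar p), 0, 0;
     -(uPar p) * starRingEnd ℂ τ, uPar p ^ 2, τ;
     0, 0, starRingEnd ℂ (uPar p)]

/-- The reflection `R₃ = J·R₂·J⁻¹` of `S(p,τ)`. -/
def R3S (p : ℕ) (τ : ℂ) : Matrix (Fin 3) (Fin 3) ℂ :=
  !![starRingEnd ℂ (uPar p), 0, 0;
     0, starRingEnd ℂ (uPar p), 0;
     τ, -(uPar p) * starRingEnd ℂ τ, uPar p ^ 2]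

/-- The cyclic permutation matrix `J`. -/
def Jmat : Matrix (Fin 3) (Fin 3) ℂ :=
  !![0, 0, 1; 1, 0, 0; 0, 1, 0]

/-- The linear functional `x ↦ a·x₁ + b·x₂ + c·x₃` on `ℂ³`. -/
def lfun (a b c : ℂ) : (Fin 3 → ℂ) →ₗ[ℂ] ℂ :=
  a • (LinearMap.proj 0 : (Fin 3 → ℂ) →ₗ[ℂ] ℂ) +
    b • (LinearMap.proj 1 : (Fin 3 → ℂ) →ₗ[ℂ] ℂ) +
    c • (LinearMap.proj 2 : (Fin 3 → ℂ) →ₗ[ℂ] ℂ)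

/-- The mirror of `R₁`: `{x ∈ ℂ³ : α·x₁ + β·x₂ + conj(β)·x₃ = 0}`,
the `H`-orthogonal complement of `e₁`. -/
def mirror1 (p : ℕ) (τ : ℂ) : Submodule ℂ (Fin 3 → ℂ) :=
  LinearMap.ker (lfun (alphaPar p) (betaPar p τ) (starRingEnd ℂ (betaPar p τ)))

/-- The stabilizer of a subspace `m` of `ℂ³` inside a subgroup `S` of `GL(3,ℂ)`:
the set of elements of `S` mapping `m` onto itself. -/
def mirrorStab (S : Subgroup (GL (Fin 3) ℂ)) (m : Submodule ℂ (Fin 3 → ℂ)) :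
    Set (GL (Fin 3) ℂ) :=
  {g | g ∈ S ∧ m.map (Matrix.mulVecLin (g : Matrix (Fin 3) (Fin 3) ℂ)) = m}

end

/- Both `J` and, by the braid relation of length five, `(R₁R₂)²` conjugate `R₁` to `R₂`, so `J`
differs from `(R₁R₂)²` by an element commuting with `R₁`. Such elements preserve `m₁`, an eigenspace
of `R₁`; and `R₂` preserves `m₂`. Hence `R₁`, `R₂` and `J` all lie in the subgroup generated by the
two stabilizers. -/

section Braid

variable {R A : Type*} [CommRing R] [Ring A] [Algebra R A] {x y : A} {v μ c : R}

/- `SemiconjBy ((a * b) ^ k) a b` is the braid relation `aba⋯a = bab⋯b` of length `2k + 1`.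
Here `a = v + x` and `b = v + y`, and expanding with the relations shows that `ababa - babab`
is the left-hand side of `hc` times `x - y`. -/
theorem semiconjBy_mul_sq_of_sq_eq_smul (hx : x * x = μ • x) (hy : y * y = μ • y)
    (hxyx : x * y * x = c • x) (hyxy : y * x * y = c • y)
    (hc : (v * (v + μ)) ^ 2 + 3 * (v * (v + μ)) * c + c ^ 2 = 0) :
    SemiconjBy (((v • 1 + x) * (v • 1 + y)) ^ 2) (v • 1 + x) (v • 1 + y) := by
  have hx' (z : A) : x * (x * z) = μ • (x * z) := by rw [← mul_assoc, hx, smul_mul_assoc]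
  have hy' (z : A) : y * (y * z) = μ • (y * z) := by rw [← mul_assoc, hy, smul_mul_assoc]
  rw [mul_assoc] at hxyx hyxy
  simp only [SemiconjBy, pow_two, mul_add, add_mul, smul_mul_assoc, mul_smul_comm, one_mul,
    mul_one, mul_assoc, hx, hx', hy, hy', hxyx, hyxy, smul_add]
  linear_combination (norm := module) hc • (x - y)

theorem semiconjBy_mul_sq_of_vecMulVec {n : Type*} [Fintype n] [DecidableEq n]
    {e e' f f' : n → R} (hf : f ⬝ᵥ e = μ) (hf' : f' ⬝ᵥ e' = μ)
    (hc : (v * (v + μ)) ^ 2 + 3 * (v * (v + μ)) * ((f ⬝ᵥ e') * (f' ⬝ᵥ e)) +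
      ((f ⬝ᵥ e') * (f' ⬝ᵥ e)) ^ 2 = 0) :
    SemiconjBy (((v • 1 + vecMulVec e f) * (v • 1 + vecMulVec e' f')) ^ 2)
      (v • 1 + vecMulVec e f) (v • 1 + vecMulVec e' f') := by
  refine semiconjBy_mul_sq_of_sq_eq_smul ?_ ?_ ?_ ?_ hc
  · simp [vecMulVec_mul_vecMulVec, hf]
  · simp [vecMulVec_mul_vecMulVec, hf']
  · simp [vecMulVec_mul_vecMulVec, smul_smul]
  · simp [vecMulVec_mul_vecMulVec, smul_smul, mul_comm]

end Braid

section Group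

variable {G : Type*} [Group G] {S K : Subgroup G} {a b g h : G}

theorem mem_of_semiconjBy_of_inf_centralizer_le (hK : S ⊓ Subgroup.centralizer {a} ≤ K)
    (hg : SemiconjBy g a b) (hgS : g ∈ S) (hh : SemiconjBy h a b) (hhS : h ∈ S) (hhK : h ∈ K) :
    g ∈ K := by
  have hcomm : Commute (h⁻¹ * g) a := hh.inv_symm_left.mul_left hg
  have hmem : h⁻¹ * g ∈ K :=
    hK ⟨S.mul_mem (S.inv_mem hhS) hgS, Subgroup.mem_centralizer_singleton_iff.mpr hcomm.eq⟩
  simpa using K.mul_mem hhK hmem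

end Group

theorem isPrimitiveRoot_uPar {p : ℕ} (hp : p ≠ 0) : IsPrimitiveRoot (uPar p) (3 * p) := by
  simpa [uPar] using Complex.isPrimitiveRoot_exp (3 * p) (by simpa using hp)

theorem norm_uPar (p : ℕ) : ‖uPar p‖ = 1 := by
  simp [uPar, Complex.norm_exp, Complex.div_re]

theorem uPar_mul_conj (p : ℕ) : uPar p * starRingEnd ℂ (uPar p) = 1 := by
  simp [Complex.mul_conj', norm_uPar]

theorem conj_uPar_sq_ne_uPar {p : ℕ} (hp : 2 ≤ p) : starRingEnd ℂ (uPar p) ^ 2 ≠ uPar p := by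
  intro h
  refine (isPrimitiveRoot_uPar (by lia)).pow_ne_one_of_pos_of_lt three_ne_zero
    (by lia : 3 < 3 * p) ?_
  calc uPar p ^ 3 = (uPar p * starRingEnd ℂ (uPar p)) ^ 2 := by rw [mul_pow, h]; ring
    _ = 1 := by rw [uPar_mul_conj, one_pow]

theorem semiconjBy_Jmat_R1S_R2S (p : ℕ) (τ : ℂ) : SemiconjBy Jmat (R1S p τ) (R2S p τ) := by
  ext a b
  fin_cases a <;> fin_cases b <;>
    simp [Jmat, R1S, R2S, Matrix.mul_apply, Fin.sum_univ_three]

theorem val_conj_eq_R2S {p : ℕ} {τ : ℂ} {r₁ j : GL (Fin 3) ℂ}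
    (hr₁ : (↑r₁ : Matrix (Fin 3) (Fin 3) ℂ) = R1S p τ)
    (hj : (↑j : Matrix (Fin 3) (Fin 3) ℂ) = Jmat) :
    (↑(j * r₁ * j⁻¹) : Matrix (Fin 3) (Fin 3) ℂ) = R2S p τ := by
  rw [Units.val_mul, Units.mul_inv_eq_iff_eq_mul, Units.val_mul, hj, hr₁]
  exact semiconjBy_Jmat_R1S_R2S p τ

theorem R1S_eq_smul_one_add (p : ℕ) (τ : ℂ) :
    R1S p τ = starRingEnd ℂ (uPar p) • 1 + vecMulVec (Pi.single 0 1)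
      ![uPar p ^ 2 - starRingEnd ℂ (uPar p), τ, -uPar p * starRingEnd ℂ τ] := by
  ext a b
  fin_cases a <;> fin_cases b <;> simp [R1S]

theorem R2S_eq_smul_one_add (p : ℕ) (τ : ℂ) :
    R2S p τ = starRingEnd ℂ (uPar p) • 1 + vecMulVec (Pi.single 1 1)
      ![-uPar p * starRingEnd ℂ τ, uPar p ^ 2 - starRingEnd ℂ (uPar p), τ] := by
  ext a b
  fin_cases a <;> fin_cases b <;> simp [R2S]

theorem semiconjBy_R1S_mul_R2S_sq (p : ℕ) {τ : ℂ}
    (hτ : (τ * starRingEnd ℂ τ) ^ 2 + 1 = 3 * (τ * starRingEnd ℂ τ)) :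
    SemiconjBy ((R1S p τ * R2S p τ) ^ 2) (R1S p τ) (R2S p τ) := by
  rw [R1S_eq_smul_one_add, R2S_eq_smul_one_add]
  refine semiconjBy_mul_sq_of_vecMulVec (μ := uPar p ^ 2 - starRingEnd ℂ (uPar p))
    (by simp) (by simp) ?_
  have hq : starRingEnd ℂ (uPar p) * (starRingEnd ℂ (uPar p) +
      (uPar p ^ 2 - starRingEnd ℂ (uPar p))) = uPar p := by
    linear_combination uPar p * uPar_mul_conj p
  rw [hq]
  simp only [dotProduct_single_one, Matrix.cons_val]
  linear_combination uPar p ^ 2 * hτ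

theorem goldenRatio_mul_conj_sq_add_one :
    ((Real.goldenRatio : ℂ) * starRingEnd ℂ (Real.goldenRatio : ℂ)) ^ 2 + 1 =
      3 * ((Real.goldenRatio : ℂ) * starRingEnd ℂ (Real.goldenRatio : ℂ)) := by
  have hφ : (Real.goldenRatio : ℂ) ^ 2 = Real.goldenRatio + 1 := by
    exact_mod_cast Real.goldenRatio_sq
  rw [Complex.conj_ofReal]
  linear_combination ((Real.goldenRatio : ℂ) ^ 2 + Real.goldenRatio - 1) * hφ

theorem sub_smul_R1S_mulVec_sub (p : ℕ) (τ : ℂ) (x : Fin 3 → ℂ) :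
    (starRingEnd ℂ (uPar p) ^ 2 - uPar p) • (R1S p τ *ᵥ x - starRingEnd ℂ (uPar p) • x) =
      Pi.single 0 (lfun (alphaPar p) (betaPar p τ) (starRingEnd ℂ (betaPar p τ)) x) := by
  have hu := uPar_mul_conj p
  have hα : (starRingEnd ℂ (uPar p) ^ 2 - uPar p) * (uPar p ^ 2 - starRingEnd ℂ (uPar p)) =
      alphaPar p := by
    rw [alphaPar]
    linear_combination (uPar p * starRingEnd ℂ (uPar p) + 2) * hu
  have hβ : (starRingEnd ℂ (uPar p) ^ 2 - uPar p) * (-uPar p * starRingEnd ℂ τ) =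
      starRingEnd ℂ (betaPar p τ) := by
    simp only [betaPar, map_mul, map_sub, map_pow, Complex.conj_conj]
    linear_combination -(starRingEnd ℂ (uPar p) * starRingEnd ℂ τ) * hu
  have hrow : (starRingEnd ℂ (uPar p) ^ 2 - uPar p) *
      (![uPar p ^ 2 - starRingEnd ℂ (uPar p), τ, -uPar p * starRingEnd ℂ τ] ⬝ᵥ x) =
      lfun (alphaPar p) (betaPar p τ) (starRingEnd ℂ (betaPar p τ)) x := by
    rw [← hα, ← hβ, betaPar, vec3_dotProduct]
    simp only [lfun, LinearMap.add_apply, LinearMap.smul_apply, LinearMap.proj_apply,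
      smul_eq_mul, Matrix.cons_val]
    ring
  rw [R1S_eq_smul_one_add, add_mulVec, smul_mulVec, one_mulVec, add_sub_cancel_left,
    vecMulVec_mulVec, ← hrow]
  ext i
  fin_cases i <;> simp

theorem mirror1_eq_eigenspace {p : ℕ} (hp : 2 ≤ p) (τ : ℂ) :
    mirror1 p τ =
      Module.End.eigenspace (Matrix.mulVecLin (R1S p τ)) (starRingEnd ℂ (uPar p)) := by
  ext x
  have hne := sub_ne_zero.mpr (conj_uPar_sq_ne_uPar hp)
  rw [mirror1, LinearMap.mem_ker, ← Pi.single_eq_zero_iff (M := fun _ : Fin 3 => ℂ) (i := 0),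
    ← sub_smul_R1S_mulVec_sub, smul_eq_zero_iff_right hne, sub_eq_zero,
    Module.End.mem_eigenspace_iff, Matrix.mulVecLin_apply]

section Stabilizers

variable {S : Subgroup (GL (Fin 3) ℂ)} {m : Submodule ℂ (Fin 3 → ℂ)} {g : GL (Fin 3) ℂ}

theorem mirrorStab_subset : mirrorStab S m ⊆ S := fun _ hg => hg.1

theorem mem_mirrorStab_of_mapsTo (hg : g ∈ S)
    (hm : Set.MapsTo (Matrix.mulVecLin (g : Matrix (Fin 3) (Fin 3) ℂ)) m m) :
    g ∈ mirrorStab S m := by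
  have hinj : Function.Injective (Matrix.mulVecLin (g : Matrix (Fin 3) (Fin 3) ℂ)) :=
    Matrix.mulVec_injective_of_isUnit g.isUnit
  exact ⟨hg, Submodule.eq_of_le_of_finrank_eq (Submodule.map_le_iff_le_comap.mpr hm)
    (Submodule.equivMapOfInjective _ hinj m).finrank_eq.symm⟩

theorem mem_mirrorStab_eigenspace_of_commute {r : GL (Fin 3) ℂ} {μ : ℂ} (hg : g ∈ S)
    (hgr : Commute g r) :
    g ∈ mirrorStab S
      (Module.End.eigenspace (Matrix.mulVecLin (r : Matrix (Fin 3) (Fin 3) ℂ)) μ) := by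
  refine mem_mirrorStab_of_mapsTo hg (Module.End.mapsTo_genEigenspace_of_comm ?_ μ 1)
  exact (hgr.units_val.map (Matrix.toLinAlgEquiv' (R := ℂ) (n := Fin 3))).symm

theorem mem_mirrorStab_mirror1_of_commute {p : ℕ} (hp : 2 ≤ p) {τ : ℂ} {r₁ : GL (Fin 3) ℂ}
    (hr₁ : (↑r₁ : Matrix (Fin 3) (Fin 3) ℂ) = R1S p τ) (hg : g ∈ S) (hgr : Commute g r₁) :
    g ∈ mirrorStab S (mirror1 p τ) := by
  rw [mirror1_eq_eigenspace hp, ← hr₁]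
  exact mem_mirrorStab_eigenspace_of_commute hg hgr

theorem mem_span_single_zero_single_one_iff {R : Type*} [Semiring R] {x : Fin 3 → R} :
    x ∈ Submodule.span R {Pi.single 0 1, Pi.single 1 1} ↔ x 2 = 0 := by
  rw [Submodule.mem_span_pair]
  refine ⟨?_, fun hx => ⟨x 0, x 1, ?_⟩⟩
  · rintro ⟨a, b, rfl⟩
    simp
  · ext i
    fin_cases i <;> simp [hx]

theorem mem_mirrorStab_span_single (hg : g ∈ S) (h₀ : g 2 0 = 0) (h₁ : g 2 1 = 0) :
    g ∈ mirrorStab S (Submodule.span ℂ {Pi.single 0 1, Pi.single 1 1}) := by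
  refine mem_mirrorStab_of_mapsTo hg fun x hx => ?_
  simp only [SetLike.mem_coe, mem_span_single_zero_single_one_iff] at hx ⊢
  simp [Matrix.mulVec, dotProduct, Fin.sum_univ_three, h₀, h₁, hx]

end Stabilizers

theorem stmt16_general {p : ℕ} (hp : 2 ≤ p) {τ : ℂ} {k : ℕ}
    (hbraid : SemiconjBy ((R1S p τ * R2S p τ) ^ k) (R1S p τ) (R2S p τ))
    {r₁ j : GL (Fin 3) ℂ}
    (hr₁ : (↑r₁ : Matrix (Fin 3) (Fin 3) ℂ) = R1S p τ)
    (hj : (↑j : Matrix (Fin 3) (Fin 3) ℂ) = Jmat) :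
    Subgroup.closure
        (mirrorStab (Subgroup.closure {r₁, j}) (mirror1 p τ) ∪
          mirrorStab (Subgroup.closure {r₁, j})
            (Submodule.span ℂ
              {Pi.single 0 1, Pi.single 1 1})) =
      Subgroup.closure {r₁, j} := by
  refine le_antisymm
    ((Subgroup.closure_le _).mpr (Set.union_subset mirrorStab_subset mirrorStab_subset)) ?_
  set S := Subgroup.closure {r₁, j}
  set K := Subgroup.closure (mirrorStab S (mirror1 p τ) ∪
    mirrorStab S (Submodule.span ℂ {Pi.single 0 1, Pi.single 1 1}))
  set r₂ := j * r₁ * j⁻¹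
  have hr₂ : (↑r₂ : Matrix (Fin 3) (Fin 3) ℂ) = R2S p τ := val_conj_eq_R2S hr₁ hj
  have hr₁S : r₁ ∈ S := Subgroup.subset_closure (by simp)
  have hjS : j ∈ S := Subgroup.subset_closure (by simp)
  have hr₂S : r₂ ∈ S := S.mul_mem (S.mul_mem hjS hr₁S) (S.inv_mem hjS)
  have hcent : S ⊓ Subgroup.centralizer {r₁} ≤ K := fun g hg =>
    Subgroup.subset_closure <| Or.inl <| mem_mirrorStab_mirror1_of_commute hp hr₁ hg.1
      (Subgroup.mem_centralizer_singleton_iff.mp hg.2)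
  have hr₁K : r₁ ∈ K := hcent ⟨hr₁S, Subgroup.mem_centralizer_singleton_iff.mpr rfl⟩
  have hr₂K : r₂ ∈ K := Subgroup.subset_closure <| Or.inr <|
    mem_mirrorStab_span_single hr₂S (by simp [hr₂, R2S]) (by simp [hr₂, R2S])
  have hjK : j ∈ K := mem_of_semiconjBy_of_inf_centralizer_le hcent
    (b := r₂) (SemiconjBy.conj_mk j r₁) hjS
    (SemiconjBy.units_of_val (by simpa [hr₁, hr₂] using hbraid))
    (S.pow_mem (S.mul_mem hr₁S hr₂S) k) (K.pow_mem (K.mul_mem hr₁K hr₂K) k)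
  exact (Subgroup.closure_le _).mpr (Set.insert_subset hr₁K (Set.singleton_subset_iff.mpr hjK))

/-- For `τ = (1+√5)/2` and `p ∈ {4,5,10}`, the lattice `S(p,τ)` is generated by
the union of the stabilizers of the mirror of `R₁` and of the mirror
`span{e₁, e₂}` of the complex reflection `(R₁R₂)⁵`. -/
theorem stmt16 (p : ℕ) (hp : p = 4 ∨ p = 5 ∨ p = 10)
    (τ : ℂ) (hτ : τ = (1 + Real.sqrt 5) / 2)
    (r₁ j : GL (Fin 3) ℂ)
    (hr₁ : (↑r₁ : Matrix (Fin 3) (Fin 3) ℂ) = R1S p τ)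
    (hj : (↑j : Matrix (Fin 3) (Fin 3) ℂ) = Jmat) :
    Subgroup.closure
        (mirrorStab (Subgroup.closure {r₁, j}) (mirror1 p τ) ∪
          mirrorStab (Subgroup.closure {r₁, j})
            (Submodule.span ℂ
              {Pi.single 0 1, Pi.single 1 1})) =
      Subgroup.closure {r₁, j} := by
  obtain rfl : τ = (Real.goldenRatio : ℂ) := by simp [hτ, Real.goldenRatio]
  exact stmt16_general (by lia)
    (semiconjBy_R1S_mul_R2S_sq p goldenRatio_mul_conj_sq_add_one) hr₁ hj
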